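/- For 0 ≤ s ≤ r < ∞ let C(r,s) denote the class of simple graphs G whose vertex set can be partitioned into r possibly empty sets V₁,…,V_r such that V_i induces a complete graph in G for 1 ≤ i ≤ s and an edgeless graph for s < i ≤ r. Then for every hereditary graph class Q: W^{(r,s)} ∈ Q̂ if and only if every graph in C(r,s) on vertex set {1,…,n} belongs to Q_n, for every n ≥ 1. -/

import Mathlib

open MeasureTheory Set Filter

noncomputable section

/-- A graphon: a symmetric measurable function `ℝ → ℝ → ℝ` with values in `[0,1]`
(only its values on `[0,1]²` matter). -/
def IsGraphon (W : ℝ → ℝ → ℝ) : Prop :=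
  (∀ x y, W x y = W y x) ∧ Measurable (Function.uncurry W) ∧
    ∀ x y, W x y ∈ Set.Icc (0 : ℝ) 1

/-- The cut norm `‖U‖_□`, the supremum over measurable `S, T ⊆ [0,1]` of
`|∫_{S×T} U|`. -/
def cutNorm (U : ℝ → ℝ → ℝ) : ℝ :=
  sSup { r : ℝ | ∃ S T : Set ℝ, MeasurableSet S ∧ MeasurableSet T ∧
    S ⊆ Set.Icc 0 1 ∧ T ⊆ Set.Icc 0 1 ∧
    r = |∫ p in S ×ˢ T, U p.1 p.2| }

/-- `d_□(W₁, W₂) = ‖W₁ - W₂‖_□`. -/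
def dCut (W₁ W₂ : ℝ → ℝ → ℝ) : ℝ := cutNorm (fun x y => W₁ x y - W₂ x y)

/-- A Lebesgue-measure-preserving map `[0,1] → [0,1]`. -/
def IsMPSelf (σ : ℝ → ℝ) : Prop :=
  MeasureTheory.MeasurePreserving σ
      (MeasureTheory.volume.restrict (Set.Icc (0:ℝ) 1))
      (MeasureTheory.volume.restrict (Set.Icc (0:ℝ) 1)) ∧
    Set.MapsTo σ (Set.Icc (0:ℝ) 1) (Set.Icc (0:ℝ) 1)

/-- The cut distance `δ_□(W₁, W₂)`. -/
def deltaCut (W₁ W₂ : ℝ → ℝ → ℝ) : ℝ :=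
  sInf { r : ℝ | ∃ σ₁ σ₂ : ℝ → ℝ, IsMPSelf σ₁ ∧ IsMPSelf σ₂ ∧
    r = cutNorm (fun x y => W₁ (σ₁ x) (σ₁ y) - W₂ (σ₂ x) (σ₂ y)) }

/-- The binary entropy function `h` (base-2 logarithm; `logb 2 0 = 0` by convention,
so `h 0 = h 1 = 0`). -/
def binEnt (x : ℝ) : ℝ := -x * Real.logb 2 x - (1 - x) * Real.logb 2 (1 - x)

/-- `h̃ x = h (min x (1/2))`. -/
def htilde (x : ℝ) : ℝ := binEnt (min x (1/2))

/-- The entropy `Ent(W) = ∫₀¹∫₀¹ h(W(x,y)) dx dy` of a graphon. -/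
def graphonEnt (W : ℝ → ℝ → ℝ) : ℝ :=
  ∫ x in Set.Icc (0:ℝ) 1, ∫ y in Set.Icc (0:ℝ) 1, binEnt (W x y)

open Classical in
/-- The graphon `W_G` of a simple graph `G` on `{1, …, n}` (vertices as `Fin n`,
vertex `i : Fin n` representing `i+1`): `W_G x y = 1` iff `⌈nx⌉⌈ny⌉ ∈ E(G)`. -/
def graphonOfGraph {n : ℕ} (G : SimpleGraph (Fin n)) : ℝ → ℝ → ℝ := fun x y =>
  if ∃ i j : Fin n, G.Adj i j ∧ ⌈(n : ℝ) * x⌉ = ((i : ℕ) : ℤ) + 1 ∧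
      ⌈(n : ℝ) * y⌉ = ((j : ℕ) : ℤ) + 1
  then 1 else 0

/-- A labelled graph class: a set of graphs on `{1,…,n}` for each `n`. -/
abbrev GraphClass := ∀ n : ℕ, Set (SimpleGraph (Fin n))

/-- A graph class is closed under relabelling by permutations. -/
def IsGraphClass (Q : GraphClass) : Prop :=
  ∀ (n : ℕ) (π : Equiv.Perm (Fin n)) (G : SimpleGraph (Fin n)),
    G ∈ Q n → G.comap ⇑π ∈ Q n

/-- A hereditary graph class: a graph class closed under taking induced subgraphs
(relabelled by the order-preserving bijection). -/
def IsHereditary (Q : GraphClass) : Prop :=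
  IsGraphClass Q ∧
    ∀ (m n : ℕ) (f : Fin m → Fin n), StrictMono f →
      ∀ G ∈ Q n, G.comap f ∈ Q m

/-- `Q̂`: the set of graphons which are limits (in cut distance) of sequences of graphs in
the class `Q` whose orders tend to infinity. -/
def limitSet (Q : GraphClass) : Set (ℝ → ℝ → ℝ) :=
  { W | IsGraphon W ∧
    ∃ (nk : ℕ → ℕ) (Gk : ∀ k, SimpleGraph (Fin (nk k))),
      (∀ k, Gk k ∈ Q (nk k)) ∧ Filter.Tendsto nk Filter.atTop Filter.atTop ∧
      Filter.Tendsto (fun k => deltaCut (graphonOfGraph (Gk k)) W) Filter.atTop (nhds 0) }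

/-- `C(n,2) = n(n-1)/2` as a real number. -/
def choose2 (n : ℕ) : ℝ := (n : ℝ) * ((n : ℝ) - 1) / 2

open Classical in
/-- The step function `E[W | P]` obtained by averaging `W` over the products of the
parts of the partition `P` of `[0,1]`. -/
def condExpPart {k : ℕ} (P : Fin k → Set ℝ) (W : ℝ → ℝ → ℝ) : ℝ → ℝ → ℝ := fun x y =>
  ∑ i : Fin k, ∑ j : Fin k,
    if x ∈ P i ∧ y ∈ P j then ⨍ p in (P i) ×ˢ (P j), W p.1 p.2 else 0

/-- `W̄_n`: the step function of `W` for the partition of `[0,1]` into `n` consecutive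
intervals of length `1/n`. -/
def barStep (n : ℕ) (W : ℝ → ℝ → ℝ) : ℝ → ℝ → ℝ :=
  condExpPart (fun i : Fin n => Set.Ioc (((i : ℕ) : ℝ)/n) ((((i : ℕ) : ℝ) + 1)/n)) W

/-- `N̂_□(n, δ; W)`: the number of graphs `G` on `{1,…,n}` with `d_□(W_G, W) ≤ δ`. -/
def NhatCut (n : ℕ) (δ : ℝ) (W : ℝ → ℝ → ℝ) : ℕ :=
  Nat.card {G : SimpleGraph (Fin n) // dCut (graphonOfGraph G) W ≤ δ}

/-- `N_□(n, δ; W)`: the number of graphs `G` on `{1,…,n}` with `δ_□(W_G, W) ≤ δ`. -/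
def NCut (n : ℕ) (δ : ℝ) (W : ℝ → ℝ → ℝ) : ℕ :=
  Nat.card {G : SimpleGraph (Fin n) // deltaCut (graphonOfGraph G) W ≤ δ}

open Classical in
/-- The induced density `p(F; W)` of a graph `F` on `{1,…,k}` in a graphon `W`. -/
def inducedDensity {k : ℕ} (F : SimpleGraph (Fin k)) (W : ℝ → ℝ → ℝ) : ℝ :=
  ∫ x : Fin k → ℝ in Set.univ.pi (fun _ : Fin k => Set.Icc (0:ℝ) 1),
    ∏ i : Fin k, ∏ j : Fin k,
      if i < j then (if F.Adj i j then W (x i) (x j) else 1 - W (x i) (x j)) else 1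

open Classical in
/-- The randomness support graphon `1_{rand(W)}` of `W`. -/
def randIndicator (W : ℝ → ℝ → ℝ) : ℝ → ℝ → ℝ := fun x y =>
  if 0 < W x y ∧ W x y < 1 then 1 else 0

/-- A kernel `U` is `K_r`-free if `∏_{i<j} U(x_i, x_j) = 0` for a.e. `x ∈ [0,1]^r`. -/
def KFree (r : ℕ) (U : ℝ → ℝ → ℝ) : Prop :=
  ∀ᵐ x ∂(MeasureTheory.volume.restrict (Set.univ.pi fun _ : Fin r => Set.Icc (0:ℝ) 1)),
    (∏ i : Fin r, ∏ j : Fin r, if i < j then U (x i) (x j) else 1) = 0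

open Classical in
/-- The graphon `W^{(r,s)}`: equal to `1/2` off the diagonal blocks, `1` on the first `s`
diagonal blocks `I_i × I_i`, and `0` on the remaining diagonal blocks. -/
def Wrs (r s : ℕ) : ℝ → ℝ → ℝ := fun x y =>
  if ∃ i j : Fin r, i ≠ j ∧ x ∈ Set.Ioc (((i:ℕ):ℝ)/r) ((((i:ℕ):ℝ)+1)/r) ∧
      y ∈ Set.Ioc (((j:ℕ):ℝ)/r) ((((j:ℕ):ℝ)+1)/r)
  then 1/2
  else if ∃ i : Fin r, (i:ℕ) < s ∧ x ∈ Set.Ioc (((i:ℕ):ℝ)/r) ((((i:ℕ):ℝ)+1)/r) ∧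
      y ∈ Set.Ioc (((i:ℕ):ℝ)/r) ((((i:ℕ):ℝ)+1)/r)
  then 1 else 0

/-- `E_r = ⋃_{i ≠ j} I_i × I_j` where `I_i`, `i = 1, …, r`, are the consecutive
intervals of length `1/r` in `[0,1]`. -/
def Er (r : ℕ) : Set (ℝ × ℝ) :=
  ⋃ (i : Fin r) (j : Fin r) (_ : i ≠ j),
    (Set.Ioc (((i:ℕ):ℝ)/r) ((((i:ℕ):ℝ)+1)/r)) ×ˢ (Set.Ioc (((j:ℕ):ℝ)/r) ((((j:ℕ):ℝ)+1)/r))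

/-- `R_r`: the set of graphons equal to `1/2` on `E_r` and `{0,1}`-valued elsewhere
on `[0,1]²`. -/
def Rset (r : ℕ) : Set (ℝ → ℝ → ℝ) :=
  { W | IsGraphon W ∧ (∀ p ∈ Er r, W p.1 p.2 = 1/2) ∧
      ∀ p ∈ ((Set.Icc (0:ℝ) 1) ×ˢ (Set.Icc (0:ℝ) 1)) \ Er r,
        W p.1 p.2 = 0 ∨ W p.1 p.2 = 1 }

/-- A graphon is random-free if it is `{0,1}`-valued a.e. on `[0,1]²`. -/
def IsRandomFree (W : ℝ → ℝ → ℝ) : Prop :=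
  ∀ᵐ p ∂(MeasureTheory.volume.restrict ((Set.Icc (0:ℝ) 1) ×ˢ (Set.Icc (0:ℝ) 1))),
    W (Prod.fst p) (Prod.snd p) = 0 ∨ W (Prod.fst p) (Prod.snd p) = 1


/-- Membership in the class `C(r,s)`: the vertex set can be partitioned into `r` (possibly
empty) parts such that the first `s` parts induce complete subgraphs and the remaining
parts induce edgeless subgraphs. -/
def MemCRS (r s : ℕ) {n : ℕ} (G : SimpleGraph (Fin n)) : Prop :=
  ∃ c : Fin n → Fin r, ∀ u v : Fin n, u ≠ v → c u = c v →
    (((c u : ℕ) < s → G.Adj u v) ∧ (s ≤ (c u : ℕ) → ¬ G.Adj u v))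

/-!
If `W^{(r,s)}` is the limit of graphs `G_k ∈ Q` and `F ∈ C(r,s)`, then `p(F; W^{(r,s)}) > 0`: choose
the type of each vertex of `F` in the interval of its part. Induced densities are continuous in the
cut distance, so `p(F; W_{G_k})` stays bounded away from `0`, while the chance that two of the
sampled types hit the same vertex of `G_k` vanishes. Hence `F` is an induced subgraph of some `G_k`,
and `F ∈ Q`.

Conversely, `C(r,s) ⊆ Q` puts into `Q` the graphs with `r` parts of size `m = 2^k`, complete or
edgeless inside the parts and given by a symmetric `m × m` Hadamard matrix between them. By
Lindsey's lemma these are quasirandom of density `1/2` between the parts, within `1/√m` of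
`W^{(r,s)}` in cut norm.
-/

section CutBound

variable {α β : Type*} [MeasurableSpace α] [MeasurableSpace β]

/-- The measure-theoretic form of the bound `‖U‖_□ ≤ ε`, for a kernel on any product space and with
the two marginal measures explicit. -/
def CutNormLE (μ : Measure α) (ν : Measure β) (U : α × β → ℝ) (ε : ℝ) : Prop :=
  ∀ ⦃S : Set α⦄ ⦃T : Set β⦄, MeasurableSet S → MeasurableSet T →
    |∫ p in S ×ˢ T, U p ∂μ.prod ν| ≤ ε

theorem memLp_top_of_mem_Icc {μ : Measure α} {f : α → ℝ} (hf : Measurable f)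
    (hf01 : ∀ x, f x ∈ Icc (0 : ℝ) 1) : MemLp f ⊤ μ :=
  memLp_top_of_bound hf.aestronglyMeasurable 1 <| ae_of_all _ fun x ↦ by
    rw [Real.norm_of_nonneg (hf01 x).1]; exact (hf01 x).2

theorem exists_measurableSet_forall_integral_mul_le {μ : Measure α} {h : α → ℝ}
    (hh : Integrable h μ) :
    ∃ S, MeasurableSet S ∧ ∀ a : α → ℝ, Measurable a → (∀ x, a x ∈ Icc (0 : ℝ) 1) →
      ∫ x, h x * a x ∂μ ≤ ∫ x in S, h x ∂μ := by
  have hmk : h =ᵐ[μ] hh.1.mk h := hh.1.ae_eq_mk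
  have hS : MeasurableSet {x | 0 < hh.1.mk h x} :=
    measurableSet_lt measurable_const hh.1.stronglyMeasurable_mk.measurable
  refine ⟨_, hS, fun a ha ha01 ↦ ?_⟩
  rw [← integral_indicator hS]
  refine integral_mono_ae (hh.mul_of_top_left (memLp_top_of_mem_Icc ha ha01))
    (hh.indicator hS) ?_
  filter_upwards [hmk] with x hx
  by_cases hpos : 0 < hh.1.mk h x
  · rw [indicator_of_mem (by exact hpos)]
    exact mul_le_of_le_one_right (hx ▸ hpos.le) (ha01 x).2
  · rw [indicator_of_notMem (by exact hpos)]
    exact mul_nonpos_of_nonpos_of_nonneg (hx ▸ not_lt.1 hpos) (ha01 x).1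

namespace CutNormLE

variable {μ : Measure α} {ν : Measure β} {U : α × β → ℝ} {ε : ℝ}

theorem neg (h : CutNormLE μ ν U ε) : CutNormLE μ ν (fun p ↦ -U p) ε := fun S T hS hT ↦ by
  simpa only [integral_neg, abs_neg] using h hS hT

variable [SFinite μ] [SFinite ν]

theorem integral_mul_le (h : CutNormLE μ ν U ε) (hU : Integrable U (μ.prod ν)) {a : α → ℝ}
    {b : β → ℝ} (ha : Measurable a) (ha01 : ∀ x, a x ∈ Icc (0 : ℝ) 1) (hb : Measurable b)
    (hb01 : ∀ y, b y ∈ Icc (0 : ℝ) 1) :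
    ∫ p, U p * (a p.1 * b p.2) ∂μ.prod ν ≤ ε := by
  have hUb : Integrable (fun p ↦ U p * b p.2) (μ.prod ν) :=
    hU.mul_of_top_left (memLp_top_of_mem_Icc (hb.comp measurable_snd) fun p ↦ hb01 p.2)
  have hUba : Integrable (fun p ↦ U p * b p.2 * a p.1) (μ.prod ν) :=
    hUb.mul_of_top_left (memLp_top_of_mem_Icc (ha.comp measurable_fst) fun p ↦ ha01 p.1)
  obtain ⟨S, hS, hSmax⟩ := exists_measurableSet_forall_integral_mul_le hUb.integral_prod_left
  have hUS : Integrable U ((μ.restrict S).prod ν) := by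
    simpa only [← Measure.prod_restrict, Measure.restrict_univ] using hU.restrict (s := S ×ˢ univ)
  obtain ⟨T, hT, hTmax⟩ := exists_measurableSet_forall_integral_mul_le hUS.integral_prod_right
  calc ∫ p, U p * (a p.1 * b p.2) ∂μ.prod ν
      = ∫ x, (∫ y, U (x, y) * b y ∂ν) * a x ∂μ := by
        simp only [← integral_mul_const]
        rw [← integral_prod _ hUba]
        exact integral_congr_ae <| ae_of_all _ fun p ↦ by ring
    _ ≤ ∫ x in S, ∫ y, U (x, y) * b y ∂ν ∂μ := hSmax a ha ha01
    _ = ∫ y, (∫ x in S, U (x, y) ∂μ) * b y ∂ν := by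
        simp only [← integral_mul_const]
        refine integral_integral_swap ?_
        exact hUS.mul_of_top_left (memLp_top_of_mem_Icc (hb.comp measurable_snd) fun p ↦ hb01 p.2)
    _ ≤ ∫ y in T, ∫ x in S, U (x, y) ∂μ ∂ν := hTmax b hb hb01
    _ = ∫ p in S ×ˢ T, U p ∂μ.prod ν := by
        rw [← Measure.prod_restrict, integral_prod_symm]
        rw [Measure.prod_restrict]; exact hU.restrict
    _ ≤ ε := (le_abs_self _).trans (h hS hT)

theorem abs_integral_mul_le (h : CutNormLE μ ν U ε) (hU : Integrable U (μ.prod ν)) {a : α → ℝ}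
    {b : β → ℝ} (ha : Measurable a) (ha01 : ∀ x, a x ∈ Icc (0 : ℝ) 1) (hb : Measurable b)
    (hb01 : ∀ y, b y ∈ Icc (0 : ℝ) 1) :
    |∫ p, U p * (a p.1 * b p.2) ∂μ.prod ν| ≤ ε := by
  refine abs_le'.2 ⟨h.integral_mul_le hU ha ha01 hb hb01, ?_⟩
  simpa only [neg_mul, integral_neg] using h.neg.integral_mul_le hU.neg ha ha01 hb hb01

end CutNormLE

end CutBound

section Resampling

variable {ι : Type*} [Fintype ι] [DecidableEq ι] {Ω : ι → Type*} [∀ i, MeasurableSpace (Ω i)]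
  (μ : ∀ i, Measure (Ω i)) [∀ i, SigmaFinite (μ i)] (i : ι) [IsProbabilityMeasure (μ i)]

theorem measurePreserving_update :
    MeasurePreserving (fun p : (∀ j, Ω j) × Ω i ↦ Function.update p.1 i p.2)
      ((Measure.pi μ).prod (μ i)) (Measure.pi μ) := by
  have hmeas : Measurable fun p : (∀ j, Ω j) × Ω i ↦ Function.update p.1 i p.2 := by
    fun_prop
  refine ⟨hmeas, (Measure.pi_eq fun s hs ↦ ?_).symm⟩
  have hpre : (fun p : (∀ j, Ω j) × Ω i ↦ Function.update p.1 i p.2) ⁻¹' univ.pi s =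
      univ.pi (Function.update s i univ) ×ˢ s i := by
    ext ⟨x, t⟩
    simp only [mem_preimage, mem_prod, mem_univ_pi]
    refine ⟨fun h ↦ ⟨fun j ↦ ?_, by simpa using h i⟩, fun h j ↦ ?_⟩
    · rcases eq_or_ne j i with rfl | hj
      · simp
      · simpa [hj] using h j
    · rcases eq_or_ne j i with rfl | hj
      · simpa using h.2
      · simpa [hj] using h.1 j
  rw [Measure.map_apply hmeas (.univ_pi hs), hpre, Measure.prod_prod, Measure.pi_pi,
    ← Finset.mul_prod_erase _ _ (Finset.mem_univ i),
    ← Finset.mul_prod_erase _ (fun j ↦ μ j (s j)) (Finset.mem_univ i), Function.update_self,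
    measure_univ, one_mul, mul_comm]
  congr 1
  exact Finset.prod_congr rfl fun j hj ↦ by rw [Function.update_of_ne (Finset.ne_of_mem_erase hj)]

variable {μ} in
theorem integral_pi_eq_integral_integral_update {F : (∀ j, Ω j) → ℝ}
    (hF : Integrable F (Measure.pi μ)) :
    ∫ x, F x ∂Measure.pi μ = ∫ x, ∫ t, F (Function.update x i t) ∂μ i ∂Measure.pi μ := by
  have hmp := measurePreserving_update μ i
  calc ∫ x, F x ∂Measure.pi μ
      = ∫ p : (∀ j, Ω j) × Ω i, F (Function.update p.1 i p.2) ∂(Measure.pi μ).prod (μ i) := by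
        conv_lhs => rw [← hmp.map_eq]
        exact integral_map hmp.aemeasurable (by rw [hmp.map_eq]; exact hF.1)
    _ = _ := integral_prod _ (hmp.integrable_comp_of_integrable hF)

end Resampling

theorem measure_pi_setOf_apply_eq_le {ι Ω κ : Type*} [Fintype ι] [MeasurableSpace Ω]
    [MeasurableSpace κ] [DiscreteMeasurableSpace κ] [Countable κ] (μ : Measure Ω)
    [IsProbabilityMeasure μ] {c : Ω → κ} (hc : Measurable c) {ε : ENNReal}
    (hε : ∀ a, μ (c ⁻¹' {a}) ≤ ε) {i j : ι} (hij : i ≠ j) :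
    Measure.pi (fun _ ↦ μ) {x : ι → Ω | c (x i) = c (x j)} ≤ ε := by
  classical
  have hS : MeasurableSet {x : ι → Ω | c (x i) = c (x j)} :=
    measurableSet_eq_fun (hc.comp (measurable_pi_apply i)) (hc.comp (measurable_pi_apply j))
  have hmp := measurePreserving_update (fun _ : ι ↦ μ) i
  calc Measure.pi (fun _ ↦ μ) {x : ι → Ω | c (x i) = c (x j)}
      = ∫⁻ x, μ (c ⁻¹' {c (x j)}) ∂Measure.pi (fun _ : ι ↦ μ) := by
        rw [← hmp.measure_preimage hS.nullMeasurableSet, Measure.prod_apply (hmp.measurable hS)]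
        refine lintegral_congr fun x ↦ congrArg μ ?_
        ext t
        simp [hij.symm]
    _ ≤ ∫⁻ _, ε ∂Measure.pi (fun _ : ι ↦ μ) := lintegral_mono fun x ↦ hε _
    _ = ε := by simp

theorem measure_pi_setOf_not_injective_le {ι Ω κ : Type*} [Fintype ι] [LinearOrder ι]
    [MeasurableSpace Ω] [MeasurableSpace κ] [DiscreteMeasurableSpace κ] [Countable κ]
    (μ : Measure Ω) [IsProbabilityMeasure μ] {c : Ω → κ} (hc : Measurable c) {ε : ENNReal}
    (hε : ∀ a, μ (c ⁻¹' {a}) ≤ ε) :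
    Measure.pi (fun _ ↦ μ) {x : ι → Ω | ¬Function.Injective (c ∘ x)} ≤
      (Fintype.card ι).choose 2 * ε := by
  let E : Finset (ι × ι) := {e | e.1 < e.2}
  have hsub : {x : ι → Ω | ¬Function.Injective (c ∘ x)} ⊆
      ⋃ e ∈ E, {x | c (x e.1) = c (x e.2)} := by
    intro x hx
    obtain ⟨i, j, hij, hne⟩ := Function.not_injective_iff.1 hx
    rcases hne.lt_or_gt with h | h
    · exact mem_biUnion (x := (i, j)) (by simpa [E] using h) hij
    · exact mem_biUnion (x := (j, i)) (by simpa [E] using h) hij.symm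
  calc Measure.pi (fun _ ↦ μ) {x : ι → Ω | ¬Function.Injective (c ∘ x)}
      ≤ ∑ e ∈ E, Measure.pi (fun _ ↦ μ) {x : ι → Ω | c (x e.1) = c (x e.2)} :=
        (measure_mono hsub).trans (measure_biUnion_finset_le E _)
    _ ≤ E.card • ε := Finset.sum_le_card_nsmul _ _ _ fun e he ↦
        measure_pi_setOf_apply_eq_le μ hc hε (Finset.mem_filter.1 he).2.ne
    _ = (Fintype.card ι).choose 2 * ε := by
        rw [nsmul_eq_mul, Fintype.card_product_filter_lt]

section Counting

theorem prod_ite_mem_insert_sub {ι R : Type*} [DecidableEq ι] [CommRing R] {s t : Finset ι}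
    {f g : ι → R} {i : ι} (his : i ∈ s) (hit : i ∉ t) :
    (∏ j ∈ s, if j ∈ insert i t then f j else g j) - (∏ j ∈ s, if j ∈ t then f j else g j) =
      (f i - g i) * ∏ j ∈ s.erase i, if j ∈ t then f j else g j := by
  have herase : (∏ j ∈ s.erase i, if j ∈ insert i t then f j else g j) =
      ∏ j ∈ s.erase i, if j ∈ t then f j else g j :=
    Finset.prod_congr rfl fun j hj ↦ by
      simp only [Finset.mem_insert, Finset.ne_of_mem_erase hj, false_or]
  rw [← Finset.mul_prod_erase s _ his, ← Finset.mul_prod_erase s (fun j ↦ ite (j ∈ t) _ _) his,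
    herase, if_pos (Finset.mem_insert_self i t), if_neg hit, sub_mul]

variable {V Ω : Type*} [Fintype V] [MeasurableSpace Ω] {μ : Measure Ω} [IsProbabilityMeasure μ]
  {U : Ω × Ω → ℝ} {ε : ℝ}

theorem CutNormLE.abs_integral_pi_mul_le (h : CutNormLE μ μ U ε) (hU : Measurable U) {M : ℝ}
    (hM : ∀ p, |U p| ≤ M) {i j : V} (hij : i ≠ j) {A B : (V → Ω) → ℝ} (hA : Measurable A)
    (hA01 : ∀ x, A x ∈ Icc (0 : ℝ) 1) (hAj : DependsOn A {j}ᶜ) (hB : Measurable B)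
    (hB01 : ∀ x, B x ∈ Icc (0 : ℝ) 1) (hBi : DependsOn B {i}ᶜ) :
    |∫ x, U (x i, x j) * (A x * B x) ∂Measure.pi fun _ ↦ μ| ≤ ε := by
  classical
  set π : Measure (V → Ω) := Measure.pi fun _ ↦ μ
  have hUint : Integrable U (μ.prod μ) :=
    .of_bound hU.aestronglyMeasurable M (ae_of_all _ hM)
  have hF : Integrable (fun x ↦ U (x i, x j) * (A x * B x)) π :=
    Integrable.mul_of_top_left (.of_bound (Measurable.aestronglyMeasurable (by fun_prop)) M
      (ae_of_all _ fun x ↦ hM _))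
      (memLp_top_of_mem_Icc (hA.mul hB) fun x ↦ unitInterval.mul_mem (hA01 x) (hB01 x))
  have hAi (x : V → Ω) (t u : Ω) :
      A (Function.update (Function.update x j u) i t) = A (Function.update x i t) :=
    hAj fun k hk ↦ by rw [Function.update_comm hij.symm, Function.update_of_ne hk]
  have hBj (x : V → Ω) (t u : Ω) :
      B (Function.update (Function.update x j u) i t) = B (Function.update x j u) :=
    hBi fun k hk ↦ Function.update_of_ne hk ..
  have hinner (x : V → Ω) :
      ‖∫ u, ∫ t, U (t, u) * (A (Function.update x i t) * B (Function.update x j u)) ∂μ ∂μ‖ ≤ ε := by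
    have ha : Measurable fun t ↦ A (Function.update x i t) := hA.comp (measurable_update x)
    have hb : Measurable fun u ↦ B (Function.update x j u) := hB.comp (measurable_update x)
    have := h.abs_integral_mul_le hUint ha (fun t ↦ hA01 _) hb (fun u ↦ hB01 _)
    rwa [integral_prod_symm] at this
    refine hUint.mul_of_top_left (memLp_top_of_mem_Icc (by fun_prop) fun p ↦
      unitInterval.mul_mem (hA01 _) (hB01 _))
  have hFi : Integrable (fun x ↦ ∫ t, U (t, x j) * (A (Function.update x i t) *
      B (Function.update x i t)) ∂μ) π := by
    simpa [Function.update_of_ne hij.symm] using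
      ((measurePreserving_update (fun _ ↦ μ) i).integrable_comp_of_integrable hF).integral_prod_left
  rw [integral_pi_eq_integral_integral_update i hF]
  simp only [Function.update_self, Function.update_of_ne hij.symm]
  rw [integral_pi_eq_integral_integral_update j hFi]
  simp only [Function.update_self, hAi, hBj]
  simpa using norm_integral_le_of_norm_le_const (μ := π) (ae_of_all _ hinner)

variable [LinearOrder V] {E : Finset (V × V)}

theorem CutNormLE.abs_integral_pi_mul_prod_le (h : CutNormLE μ μ U ε) (hU : Measurable U) {M : ℝ}
    (hM : ∀ p, |U p| ≤ M) (hE : ∀ e ∈ E, e.1 < e.2) {i j : V} (hij : i < j) (hijE : (i, j) ∉ E)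
    {w : V × V → Ω × Ω → ℝ} (hw : ∀ e, Measurable (w e)) (hw01 : ∀ e p, w e p ∈ Icc (0 : ℝ) 1) :
    |∫ x, U (x i, x j) * ∏ e ∈ E, w e (x e.1, x e.2) ∂Measure.pi fun _ ↦ μ| ≤ ε := by
  have hmeas (D : Finset (V × V)) :
      Measurable fun x : V → Ω ↦ ∏ e ∈ D, w e (x e.1, x e.2) := by fun_prop
  have h01 (D : Finset (V × V)) (x : V → Ω) : ∏ e ∈ D, w e (x e.1, x e.2) ∈ Icc (0 : ℝ) 1 :=
    unitInterval.prod_mem fun e _ ↦ hw01 e _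
  have hdep {k : V} {D : Finset (V × V)} (hD : ∀ e ∈ D, e.1 ≠ k ∧ e.2 ≠ k) :
      DependsOn (fun x : V → Ω ↦ ∏ e ∈ D, w e (x e.1, x e.2)) {k}ᶜ := fun x y hxy ↦
    Finset.prod_congr rfl fun e he ↦ by rw [hxy _ (hD e he).1, hxy _ (hD e he).2]
  simp only [← Finset.prod_filter_not_mul_prod_filter E fun e ↦ e.1 = j ∨ e.2 = j]
  refine h.abs_integral_pi_mul_le hU hM hij.ne (hmeas _) (h01 _) (hdep ?_) (hmeas _) (h01 _)
    (hdep ?_)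
  · rintro e he
    exact not_or.1 (Finset.mem_filter.1 he).2
  · rintro ⟨a, b⟩ he
    obtain ⟨heE, rfl | rfl⟩ := Finset.mem_filter.1 he
    · exact ⟨hij.ne', (hij.trans (hE _ heE)).ne'⟩
    · exact ⟨by rintro rfl; exact hijE heE, hij.ne'⟩

theorem abs_integral_pi_prod_sub_le (hE : ∀ e ∈ E, e.1 < e.2) {f g : V × V → Ω × Ω → ℝ}
    (hf : ∀ e, Measurable (f e)) (hf01 : ∀ e p, f e p ∈ Icc (0 : ℝ) 1)
    (hg : ∀ e, Measurable (g e)) (hg01 : ∀ e p, g e p ∈ Icc (0 : ℝ) 1)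
    (hcut : ∀ e ∈ E, CutNormLE μ μ (fun p ↦ f e p - g e p) ε) :
    |(∫ x, ∏ e ∈ E, f e (x e.1, x e.2) ∂Measure.pi fun _ ↦ μ) -
      ∫ x, ∏ e ∈ E, g e (x e.1, x e.2) ∂Measure.pi fun _ ↦ μ| ≤ E.card * ε := by
  set π : Measure (V → Ω) := Measure.pi fun _ ↦ μ
  let w (D : Finset (V × V)) (e : V × V) (p : Ω × Ω) : ℝ := if e ∈ D then f e p else g e p
  have hw (D e) : Measurable (w D e) := by
    by_cases he : e ∈ D <;> simp only [w, he, if_true, if_false, hf, hg]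
  have hw01 (D e p) : w D e p ∈ Icc (0 : ℝ) 1 := by
    by_cases he : e ∈ D <;> simp only [w, he, if_true, if_false, hf01, hg01]
  have hint (D) : Integrable (fun x ↦ ∏ e ∈ E, w D e (x e.1, x e.2)) π :=
    (memLp_top_of_mem_Icc (by fun_prop) fun x ↦
      unitInterval.prod_mem fun e _ ↦ hw01 D e _).integrable le_top
  have hbound (e p) : |f e p - g e p| ≤ 1 :=
    abs_sub_le_of_nonneg_of_le (hf01 e p).1 (hf01 e p).2 (hg01 e p).1 (hg01 e p).2
  suffices H : ∀ D ⊆ E, |(∫ x, ∏ e ∈ E, w D e (x e.1, x e.2) ∂π) -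
      ∫ x, ∏ e ∈ E, g e (x e.1, x e.2) ∂π| ≤ D.card * ε by
    convert H E Finset.Subset.rfl using 5 with x
    exact Finset.prod_congr rfl fun e he ↦ (if_pos he).symm
  intro D
  induction D using Finset.induction_on with
  | empty => simp [w]
  | insert e D heD ih =>
    intro hD
    obtain ⟨heE, hDE⟩ := Finset.insert_subset_iff.1 hD
    have hstep : |(∫ x, ∏ e' ∈ E, w (insert e D) e' (x e'.1, x e'.2) ∂π) -
        ∫ x, ∏ e' ∈ E, w D e' (x e'.1, x e'.2) ∂π| ≤ ε := by
      rw [← integral_sub (hint _) (hint _)]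
      simp only [w, prod_ite_mem_insert_sub heE heD]
      exact (hcut e heE).abs_integral_pi_mul_prod_le ((hf e).sub (hg e)) (hbound e)
        (fun e' he' ↦ hE e' (Finset.mem_of_mem_erase he')) (hE e heE) (Finset.notMem_erase e E)
        (hw D) (hw01 D)
    calc _ ≤ ε + D.card * ε := (abs_sub_le _ _ _).trans (add_le_add hstep (ih hDE))
      _ = (insert e D).card * ε := by rw [Finset.card_insert_of_notMem heD]; push_cast; ring

end Counting

section CutNorm

/-- Lebesgue measure on `[0,1]`, as a measure on `ℝ`. -/
abbrev unitMeasure : Measure ℝ := volume.restrict (Icc 0 1)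

instance : IsProbabilityMeasure unitMeasure := ⟨by simp⟩

variable {U : ℝ → ℝ → ℝ}

theorem abs_setIntegral_le_of_abs_le {M : ℝ} (hM : ∀ x y, |U x y| ≤ M) {S T : Set ℝ}
    (hS : S ⊆ Icc 0 1) (hT : T ⊆ Icc 0 1) : |∫ p in S ×ˢ T, U p.1 p.2| ≤ M := by
  have hvol : volume (S ×ˢ T) ≤ 1 :=
    calc volume (S ×ˢ T) ≤ volume (Icc (0 : ℝ) 1 ×ˢ Icc (0 : ℝ) 1) :=
          measure_mono (prod_mono hS hT)
      _ = 1 := by rw [Measure.volume_eq_prod, Measure.prod_prod]; simp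
  calc ‖∫ p in S ×ˢ T, U p.1 p.2‖ ≤ M * volume.real (S ×ˢ T) :=
        norm_setIntegral_le_of_norm_le_const (hvol.trans_lt ENNReal.one_lt_top) fun p _ ↦ hM p.1 p.2
    _ ≤ M * 1 := mul_le_mul_of_nonneg_left (ENNReal.toReal_mono ENNReal.one_ne_top hvol)
        ((abs_nonneg _).trans (hM 0 0))
    _ = M := mul_one M

theorem cutNorm_nonneg : 0 ≤ cutNorm U :=
  Real.sSup_nonneg <| by rintro _ ⟨S, T, -, -, -, -, rfl⟩; exact abs_nonneg _

theorem cutNormLE_cutNorm {M : ℝ} (hM : ∀ x y, |U x y| ≤ M) :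
    CutNormLE unitMeasure unitMeasure (fun p ↦ U p.1 p.2) (cutNorm U) := by
  intro S T hS hT
  rw [Measure.prod_restrict, Measure.restrict_restrict (hS.prod hT), prod_inter_prod]
  refine le_csSup ⟨M, ?_⟩ ⟨_, _, hS.inter measurableSet_Icc, hT.inter measurableSet_Icc,
    inter_subset_right, inter_subset_right, rfl⟩
  rintro _ ⟨S, T, -, -, hS, hT, rfl⟩
  exact abs_setIntegral_le_of_abs_le hM hS hT

theorem deltaCut_nonneg (W₁ W₂ : ℝ → ℝ → ℝ) : 0 ≤ deltaCut W₁ W₂ :=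
  Real.sInf_nonneg <| by rintro _ ⟨σ₁, σ₂, -, -, rfl⟩; exact cutNorm_nonneg

theorem isMPSelf_id : IsMPSelf id :=
  ⟨.id _, mapsTo_id _⟩

theorem deltaCut_le_dCut (W₁ W₂ : ℝ → ℝ → ℝ) : deltaCut W₁ W₂ ≤ dCut W₁ W₂ :=
  csInf_le ⟨0, by rintro _ ⟨σ₁, σ₂, -, -, rfl⟩; exact cutNorm_nonneg⟩
    ⟨id, id, isMPSelf_id, isMPSelf_id, rfl⟩

theorem IsGraphon.comp {W : ℝ → ℝ → ℝ} (hW : IsGraphon W) {σ : ℝ → ℝ} (hσ : Measurable σ) :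
    IsGraphon fun x y ↦ W (σ x) (σ y) :=
  ⟨fun _ _ ↦ hW.1 _ _, hW.2.1.comp (hσ.prodMap hσ), fun _ _ ↦ hW.2.2 _ _⟩

theorem IsGraphon.abs_sub_le_one {W₁ W₂ : ℝ → ℝ → ℝ} (h₁ : IsGraphon W₁) (h₂ : IsGraphon W₂)
    (x y : ℝ) : |W₁ x y - W₂ x y| ≤ 1 :=
  abs_sub_le_of_nonneg_of_le (h₁.2.2 x y).1 (h₁.2.2 x y).2 (h₂.2.2 x y).1 (h₂.2.2 x y).2

end CutNorm

section InducedDensity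

variable {k : ℕ} (F : SimpleGraph (Fin k))

open Classical in
/-- The factor `W(x, y)` or `1 - W(x, y)` that the pair `e` contributes to the induced density
`p(F; W)`, according to whether `e` is an edge of `F`. -/
def pairFactor (W : ℝ → ℝ → ℝ) (e : Fin k × Fin k) (p : ℝ × ℝ) : ℝ :=
  if F.Adj e.1 e.2 then W p.1 p.2 else 1 - W p.1 p.2

theorem measurable_pairFactor {W : ℝ → ℝ → ℝ} (hW : Measurable (Function.uncurry W))
    (e : Fin k × Fin k) : Measurable (pairFactor F W e) := by
  unfold pairFactor
  split_ifs
  exacts [hW, hW.const_sub 1]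

variable {W W₁ W₂ : ℝ → ℝ → ℝ}

theorem IsGraphon.pairFactor_mem_Icc (hW : IsGraphon W) (e : Fin k × Fin k) (p : ℝ × ℝ) :
    pairFactor F W e p ∈ Icc (0 : ℝ) 1 := by
  unfold pairFactor
  split_ifs
  exacts [hW.2.2 .., Icc.mem_iff_one_sub_mem.1 (hW.2.2 ..)]

/-- The conditional probability, given the types `x` of its vertices, that the `W`-random graph on
`k` vertices is `F`; the induced density `p(F; W)` is its mean over independent uniform types. -/
def inducedWeight (W : ℝ → ℝ → ℝ) (x : Fin k → ℝ) : ℝ :=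
  ∏ e : Fin k × Fin k with e.1 < e.2, pairFactor F W e (x e.1, x e.2)

theorem inducedDensity_eq_integral_pi (W : ℝ → ℝ → ℝ) :
    inducedDensity F W = ∫ x, inducedWeight F W x ∂Measure.pi fun _ ↦ unitMeasure := by
  rw [inducedDensity, volume_pi, Measure.restrict_pi_pi]
  simp only [inducedWeight, Finset.prod_filter, Fintype.prod_prod_type, pairFactor]

theorem measurable_inducedWeight (hW : Measurable (Function.uncurry W)) :
    Measurable (inducedWeight F W) := by
  have := measurable_pairFactor F hW
  unfold inducedWeight
  fun_prop

theorem IsGraphon.inducedWeight_mem_Icc (hW : IsGraphon W) (x : Fin k → ℝ) :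
    inducedWeight F W x ∈ Icc (0 : ℝ) 1 :=
  unitInterval.prod_mem fun e _ ↦ hW.pairFactor_mem_Icc F e _

theorem IsGraphon.integrable_inducedWeight (hW : IsGraphon W) :
    Integrable (inducedWeight F W) (Measure.pi fun _ ↦ unitMeasure) :=
  (memLp_top_of_mem_Icc (measurable_inducedWeight F hW.2.1)
    (hW.inducedWeight_mem_Icc F)).integrable le_top

theorem abs_inducedDensity_sub_le_dCut (h₁ : IsGraphon W₁) (h₂ : IsGraphon W₂) :
    |inducedDensity F W₁ - inducedDensity F W₂| ≤ k.choose 2 * dCut W₁ W₂ := by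
  have hcut := cutNormLE_cutNorm (h₁.abs_sub_le_one h₂)
  have hpair (e : Fin k × Fin k) : CutNormLE unitMeasure unitMeasure
      (fun p ↦ pairFactor F W₁ e p - pairFactor F W₂ e p) (dCut W₁ W₂) := by
    unfold pairFactor
    split_ifs
    · exact hcut
    · simpa only [sub_sub_sub_cancel_left, neg_sub, dCut] using hcut.neg
  rw [inducedDensity_eq_integral_pi, inducedDensity_eq_integral_pi]
  have hcount := abs_integral_pi_prod_sub_le (E := {e : Fin k × Fin k | e.1 < e.2}) (by simp)
    (measurable_pairFactor F h₁.2.1) (h₁.pairFactor_mem_Icc F) (measurable_pairFactor F h₂.2.1)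
    (h₂.pairFactor_mem_Icc F) fun e _ ↦ hpair e
  rwa [Fintype.card_product_filter_lt, Fintype.card_fin] at hcount

theorem inducedDensity_comp (hW : Measurable (Function.uncurry W)) {σ : ℝ → ℝ}
    (hσ : IsMPSelf σ) :
    inducedDensity F (fun x y ↦ W (σ x) (σ y)) = inducedDensity F W := by
  have hmp := measurePreserving_pi (fun _ : Fin k ↦ unitMeasure) (fun _ ↦ unitMeasure)
    fun _ ↦ hσ.1
  rw [inducedDensity_eq_integral_pi, inducedDensity_eq_integral_pi, ← hmp.map_eq,
    integral_map hmp.aemeasurable (measurable_inducedWeight F hW).aestronglyMeasurable, hmp.map_eq]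
  rfl

theorem abs_inducedDensity_sub_le_deltaCut (h₁ : IsGraphon W₁) (h₂ : IsGraphon W₂) :
    |inducedDensity F W₁ - inducedDensity F W₂| ≤ k.choose 2 * deltaCut W₁ W₂ := by
  rw [deltaCut, ← smul_eq_mul, ← Real.sInf_smul_of_nonneg (Nat.cast_nonneg _)]
  refine le_csInf (Nonempty.smul_set ⟨_, id, id, isMPSelf_id, isMPSelf_id, rfl⟩) ?_
  rintro _ ⟨_, ⟨σ₁, σ₂, hσ₁, hσ₂, rfl⟩, rfl⟩
  rw [← inducedDensity_comp F h₁.2.1 hσ₁, ← inducedDensity_comp F h₂.2.1 hσ₂]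
  exact abs_inducedDensity_sub_le_dCut F (h₁.comp hσ₁.1.measurable) (h₂.comp hσ₂.1.measurable)

end InducedDensity

section StepKernel

variable {N : ℕ}

/-- The `i`-th of the `N` consecutive intervals of length `1/N` in `[0,1]`, counted from `0`. -/
def cell (N : ℕ) (i : Fin N) : Set ℝ := Ioc ((i : ℝ) / N) (((i : ℝ) + 1) / N)

theorem mem_cell_iff_ceil {i : Fin N} {x : ℝ} : x ∈ cell N i ↔ ⌈(N : ℝ) * x⌉ = (i : ℤ) + 1 := by
  have hN : (0 : ℝ) < N := Nat.cast_pos.2 i.pos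
  rw [Int.ceil_eq_iff, cell, mem_Ioc, div_lt_iff₀' hN, le_div_iff₀' hN]
  push_cast
  rw [add_sub_cancel_right]

theorem eq_of_mem_cell {i j : Fin N} {x : ℝ} (hi : x ∈ cell N i) (hj : x ∈ cell N j) : i = j := by
  rw [mem_cell_iff_ceil] at hi hj
  omega

theorem cell_subset_Ioc (i : Fin N) : cell N i ⊆ Ioc 0 1 := by
  refine Ioc_subset_Ioc (by positivity) (div_le_one_of_le₀ ?_ (Nat.cast_nonneg N))
  exact_mod_cast i.isLt

theorem exists_mem_cell (hN : 0 < N) {x : ℝ} (hx : x ∈ Ioc (0 : ℝ) 1) : ∃ i, x ∈ cell N i := by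
  have hN' : (0 : ℝ) < N := Nat.cast_pos.2 hN
  have hpos : 0 < ⌈(N : ℝ) * x⌉ := Int.ceil_pos.2 (mul_pos hN' hx.1)
  have hle : ⌈(N : ℝ) * x⌉ ≤ N := Int.ceil_le.2 (by
    simpa using mul_le_of_le_one_right hN'.le hx.2)
  refine ⟨⟨(⌈(N : ℝ) * x⌉ - 1).toNat, by omega⟩, mem_cell_iff_ceil.2 ?_⟩
  simp only
  omega

theorem measurableSet_cell (i : Fin N) : MeasurableSet (cell N i) := measurableSet_Ioc

theorem volume_cell (i : Fin N) : volume (cell N i) = ENNReal.ofReal (1 / N) := by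
  rw [cell, Real.volume_Ioc, ← sub_div, add_sub_cancel_left]

theorem mem_cell_divNat {m : ℕ} {i : Fin (N * m)} {x : ℝ} (hx : x ∈ cell (N * m) i) :
    x ∈ cell N i.divNat := by
  have hm : (0 : ℝ) < m := Nat.cast_pos.2 i.modNat.pos
  have hN : (0 : ℝ) < N := Nat.cast_pos.2 i.divNat.pos
  have hlo : (i.divNat : ℝ) * m ≤ i := by exact_mod_cast Nat.div_mul_le_self i m
  have hhi : (i : ℝ) + 1 ≤ (i.divNat + 1) * m := by
    exact_mod_cast Nat.lt_mul_of_div_lt (Nat.lt_succ_self _) i.modNat.pos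
  refine Ioc_subset_Ioc ?_ ?_ hx <;> rw [Nat.cast_mul, ← mul_div_mul_right _ (N : ℝ) hm.ne'] <;>
    gcongr

/-- The kernel on `[0,1]²` that is constantly `A i j` on the product of the `i`-th and the `j`-th
cell, and `0` outside `(0,1]²`. -/
def stepKernel (A : Matrix (Fin N) (Fin N) ℝ) (x y : ℝ) : ℝ :=
  ∑ i, ∑ j, A i j * ((cell N i).indicator 1 x * (cell N j).indicator 1 y)

theorem stepKernel_of_mem (A : Matrix (Fin N) (Fin N) ℝ) {i j : Fin N} {x y : ℝ}
    (hx : x ∈ cell N i) (hy : y ∈ cell N j) : stepKernel A x y = A i j := by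
  have hind {k l : Fin N} {z : ℝ} (hz : z ∈ cell N k) :
      (cell N l).indicator (1 : ℝ → ℝ) z = if l = k then 1 else 0 := by
    split_ifs with h
    · exact indicator_of_mem (h ▸ hz) 1
    · exact indicator_of_notMem (fun hl ↦ h (eq_of_mem_cell hl hz)) 1
  simp [stepKernel, hind hx, hind hy]

theorem stepKernel_of_notMem (A : Matrix (Fin N) (Fin N) ℝ) {x y : ℝ}
    (h : ¬(x ∈ Ioc (0 : ℝ) 1 ∧ y ∈ Ioc (0 : ℝ) 1)) : stepKernel A x y = 0 := by
  refine Finset.sum_eq_zero fun i _ ↦ Finset.sum_eq_zero fun j _ ↦ ?_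
  by_cases hx : x ∈ cell N i
  · have hy : y ∉ cell N j := fun hy ↦ h ⟨cell_subset_Ioc i hx, cell_subset_Ioc j hy⟩
    simp [hy]
  · simp [hx]

theorem eq_stepKernel (hN : 0 < N) {W : ℝ → ℝ → ℝ} {A : Matrix (Fin N) (Fin N) ℝ}
    (hmem : ∀ i j, ∀ x ∈ cell N i, ∀ y ∈ cell N j, W x y = A i j)
    (hnotMem : ∀ x y, ¬(x ∈ Ioc (0 : ℝ) 1 ∧ y ∈ Ioc (0 : ℝ) 1) → W x y = 0) :
    W = stepKernel A := by
  ext x y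
  by_cases h : x ∈ Ioc (0 : ℝ) 1 ∧ y ∈ Ioc (0 : ℝ) 1
  · obtain ⟨i, hi⟩ := exists_mem_cell hN h.1
    obtain ⟨j, hj⟩ := exists_mem_cell hN h.2
    rw [hmem i j x hi y hj, stepKernel_of_mem A hi hj]
  · rw [hnotMem x y h, stepKernel_of_notMem A h]

theorem stepKernel_submatrix_divNat {m : ℕ} (hN : 0 < N) (hm : 0 < m)
    (A : Matrix (Fin N) (Fin N) ℝ) :
    stepKernel A = stepKernel (A.submatrix (Fin.divNat (n := m)) Fin.divNat) :=
  eq_stepKernel (Nat.mul_pos hN hm)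
    (fun _ _ _ hx _ hy ↦ stepKernel_of_mem A (mem_cell_divNat hx) (mem_cell_divNat hy))
    fun _ _ h ↦ stepKernel_of_notMem A h

theorem stepKernel_sub (A B : Matrix (Fin N) (Fin N) ℝ) (x y : ℝ) :
    stepKernel (A - B) x y = stepKernel A x y - stepKernel B x y := by
  simp only [stepKernel, Matrix.sub_apply, sub_mul, Finset.sum_sub_distrib]

theorem isGraphon_stepKernel {A : Matrix (Fin N) (Fin N) ℝ} (hA : A.IsSymm)
    (hA01 : ∀ i j, A i j ∈ Icc (0 : ℝ) 1) : IsGraphon (stepKernel A) := by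
  refine ⟨fun x y ↦ ?_, ?_, fun x y ↦ ?_⟩
  · unfold stepKernel
    rw [Finset.sum_comm]
    simp only [hA.apply, mul_comm (indicator _ _ x)]
  · have hind (i : Fin N) : Measurable ((cell N i).indicator (1 : ℝ → ℝ)) :=
      measurable_one.indicator (measurableSet_cell i)
    unfold Function.uncurry stepKernel
    fun_prop
  · by_cases h : x ∈ Ioc (0 : ℝ) 1 ∧ y ∈ Ioc (0 : ℝ) 1
    · rcases N.eq_zero_or_pos with rfl | hN
      · simp [stepKernel]
      · obtain ⟨i, hi⟩ := exists_mem_cell hN h.1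
        obtain ⟨j, hj⟩ := exists_mem_cell hN h.2
        rw [stepKernel_of_mem A hi hj]
        exact hA01 i j
    · rw [stepKernel_of_notMem A h]
      exact ⟨le_rfl, zero_le_one⟩

open Classical in
theorem graphonOfGraph_eq_stepKernel (G : SimpleGraph (Fin N)) :
    graphonOfGraph G = stepKernel (G.adjMatrix ℝ) := by
  rcases N.eq_zero_or_pos with rfl | hN
  · ext x y
    simp [graphonOfGraph, stepKernel]
  refine eq_stepKernel hN (fun i j x hx y hy ↦ ?_) fun x y h ↦ ?_ <;>
    simp only [graphonOfGraph, ← mem_cell_iff_ceil]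
  · rw [SimpleGraph.adjMatrix_apply]
    refine if_congr ⟨?_, fun hij ↦ ⟨i, j, hij, hx, hy⟩⟩ rfl rfl
    rintro ⟨i', j', hij, hx', hy'⟩
    rwa [eq_of_mem_cell hx hx', eq_of_mem_cell hy hy']
  · refine if_neg ?_
    rintro ⟨i, j, -, hx, hy⟩
    exact h ⟨cell_subset_Ioc i hx, cell_subset_Ioc j hy⟩

theorem isGraphon_graphonOfGraph (G : SimpleGraph (Fin N)) : IsGraphon (graphonOfGraph G) := by
  classical
  rw [graphonOfGraph_eq_stepKernel]
  refine isGraphon_stepKernel G.isSymm_adjMatrix fun i j ↦ ?_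
  rw [SimpleGraph.adjMatrix_apply]
  split_ifs <;> simp

theorem setIntegral_stepKernel (A : Matrix (Fin N) (Fin N) ℝ) (S T : Set ℝ) :
    ∫ p in S ×ˢ T, stepKernel A p.1 p.2 =
      ∑ i, ∑ j, A i j * (volume.real (cell N i ∩ S) * volume.real (cell N j ∩ T)) := by
  have hind (i : Fin N) (S : Set ℝ) :
      Integrable ((cell N i).indicator (1 : ℝ → ℝ)) (volume.restrict S) :=
    ((integrable_indicator_iff (measurableSet_cell i)).2 <|
      integrableOn_const (by simp [volume_cell])).restrict
  have hreal (i : Fin N) (S : Set ℝ) :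
      ∫ x in S, (cell N i).indicator (1 : ℝ → ℝ) x = volume.real (cell N i ∩ S) := by
    rw [integral_indicator_one (measurableSet_cell i),
      measureReal_restrict_apply (measurableSet_cell i)]
  have hterm (i j : Fin N) : Integrable
      (fun p : ℝ × ℝ ↦ A i j * ((cell N i).indicator 1 p.1 * (cell N j).indicator 1 p.2))
      (volume.restrict (S ×ˢ T)) := by
    rw [Measure.volume_eq_prod, ← Measure.prod_restrict]
    exact ((hind i S).mul_prod (hind j T)).const_mul _
  simp only [stepKernel]
  rw [integral_finsetSum _ fun i _ ↦ integrable_finsetSum _ fun j _ ↦ hterm i j]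
  refine Finset.sum_congr rfl fun i _ ↦ ?_
  rw [integral_finsetSum _ fun j _ ↦ hterm i j]
  refine Finset.sum_congr rfl fun j _ ↦ ?_
  rw [integral_const_mul, Measure.volume_eq_prod, setIntegral_prod_mul, hreal, hreal]

open Matrix in
/-- The bound `‖A‖_□ ≤ C` on the cut norm of a matrix, in its equivalent form with `[0,1]`-valued
weights on the rows and columns instead of subsets. -/
def MatrixCutNormLE {ι κ : Type*} [Fintype ι] [Fintype κ] (A : Matrix ι κ ℝ) (C : ℝ) : Prop :=
  ∀ ⦃f : ι → ℝ⦄ ⦃g : κ → ℝ⦄, (∀ i, f i ∈ Icc (0 : ℝ) 1) → (∀ j, g j ∈ Icc (0 : ℝ) 1) →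
    |f ⬝ᵥ A *ᵥ g| ≤ C

theorem MatrixCutNormLE.cutNorm_stepKernel_le {A : Matrix (Fin N) (Fin N) ℝ} {C : ℝ}
    (hA : MatrixCutNormLE A C) : cutNorm (stepKernel A) ≤ C / N ^ 2 := by
  have hmem (S : Set ℝ) (i : Fin N) : N * volume.real (cell N i ∩ S) ∈ Icc (0 : ℝ) 1 := by
    have hN : (0 : ℝ) < N := Nat.cast_pos.2 i.pos
    have : volume.real (cell N i ∩ S) ≤ 1 / N := by
      refine (measureReal_mono inter_subset_left (by simp [volume_cell])).trans_eq ?_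
      rw [measureReal_def, volume_cell, ENNReal.toReal_ofReal (by positivity)]
    exact ⟨by positivity, (le_div_iff₀' hN).1 this⟩
  refine csSup_le ⟨_, ∅, ∅, .empty, .empty, empty_subset _, empty_subset _, rfl⟩ ?_
  rintro _ ⟨S, T, -, -, -, -, rfl⟩
  rcases N.eq_zero_or_pos with rfl | hN
  · simp [setIntegral_stepKernel]
  have hN' : (0 : ℝ) < N ^ 2 := by positivity
  rw [le_div_iff₀ hN', ← abs_of_pos hN', ← abs_mul, setIntegral_stepKernel]
  refine le_of_eq_of_le (congrArg _ ?_) (hA (hmem S) (hmem T))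
  simp only [dotProduct, Matrix.mulVec, Finset.sum_mul, Finset.mul_sum]
  exact Finset.sum_congr rfl fun i _ ↦ Finset.sum_congr rfl fun j _ ↦ by ring

end StepKernel

section InducedCopies

theorem IsHereditary.comap_mem {Q : GraphClass} (hQ : IsHereditary Q) {m n : ℕ}
    {φ : Fin m → Fin n} (hφ : Function.Injective φ) {G : SimpleGraph (Fin n)} (hG : G ∈ Q n) :
    G.comap φ ∈ Q m := by
  have hsort : StrictMono (φ ∘ Tuple.sort φ) :=
    (Tuple.monotone_sort φ).strictMono_of_injective (hφ.comp (Tuple.sort φ).injective)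
  have hperm := hQ.1 _ (Tuple.sort φ)⁻¹ _ (hQ.2 _ _ _ hsort G hG)
  rw [SimpleGraph.comap_comap] at hperm
  convert hperm using 2
  ext i
  simp

variable {k N : ℕ} {F : SimpleGraph (Fin k)}

theorem unitMeasure_ceil_mul_preimage_le (hN : 0 < N) (a : ℤ) :
    unitMeasure ((fun t : ℝ ↦ ⌈(N : ℝ) * t⌉) ⁻¹' {a}) ≤ ENNReal.ofReal (1 / N) := by
  have hN' : (0 : ℝ) < N := Nat.cast_pos.2 hN
  have hsub : (fun t : ℝ ↦ ⌈(N : ℝ) * t⌉) ⁻¹' {a} ⊆ Ioc ((a - 1 : ℝ) / N) (a / N) := by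
    intro t ht
    rw [mem_preimage, mem_singleton_iff, Int.ceil_eq_iff] at ht
    rwa [mem_Ioc, div_lt_iff₀' hN', le_div_iff₀' hN']
  calc unitMeasure ((fun t : ℝ ↦ ⌈(N : ℝ) * t⌉) ⁻¹' {a})
      ≤ volume (Ioc ((a - 1 : ℝ) / N) (a / N)) :=
        (Measure.restrict_apply_le _ _).trans (measure_mono hsub)
    _ = ENNReal.ofReal (1 / N) := by
        rw [Real.volume_Ioc, ← sub_div, sub_sub_cancel]

theorem ae_pi_unitMeasure_mem_Ioc :
    ∀ᵐ x : Fin k → ℝ ∂Measure.pi fun _ ↦ unitMeasure, ∀ i, x i ∈ Ioc (0 : ℝ) 1 := by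
  have h : ∀ᵐ t ∂unitMeasure, t ∈ Ioc (0 : ℝ) 1 := by
    rw [unitMeasure, ← restrict_Ioc_eq_restrict_Icc]
    exact ae_restrict_mem measurableSet_Ioc
  exact ae_all_iff.2 fun i ↦
    (measurePreserving_eval (fun _ ↦ unitMeasure) i).quasiMeasurePreserving.ae h

theorem comap_eq_of_inducedWeight_ne_zero {G : SimpleGraph (Fin N)} {x : Fin k → ℝ}
    (hx : inducedWeight F (graphonOfGraph G) x ≠ 0) {φ : Fin k → Fin N}
    (hφ : ∀ i, x i ∈ cell N (φ i)) : G.comap φ = F := by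
  classical
  have hlt {i j : Fin k} (hij : i < j) : G.Adj (φ i) (φ j) ↔ F.Adj i j := by
    have hne := Finset.prod_ne_zero_iff.1 hx (i, j) (by simpa using hij)
    rw [pairFactor, graphonOfGraph_eq_stepKernel, stepKernel_of_mem _ (hφ i) (hφ j),
      SimpleGraph.adjMatrix_apply] at hne
    by_cases hF : F.Adj i j <;> by_cases hG : G.Adj (φ i) (φ j) <;> simp_all
  ext i j
  rcases lt_trichotomy i j with hij | rfl | hij
  · exact hlt hij
  · simp
  · rw [SimpleGraph.adj_comm, F.adj_comm]
    exact hlt hij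

theorem exists_injective_comap_eq_of_lt_inducedDensity (hN : 0 < N) {G : SimpleGraph (Fin N)}
    (h : k.choose 2 / N < inducedDensity F (graphonOfGraph G)) :
    ∃ φ : Fin k → Fin N, Function.Injective φ ∧ G.comap φ = F := by
  set π : Measure (Fin k → ℝ) := Measure.pi fun _ ↦ unitMeasure
  have hG := isGraphon_graphonOfGraph G
  let c (t : ℝ) : ℤ := ⌈(N : ℝ) * t⌉
  have hc : Measurable c := Int.measurable_ceil.comp (measurable_const_mul _)
  let B : Set (Fin k → ℝ) := {x | ¬Function.Injective (c ∘ x)}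
  have hB : MeasurableSet B :=
    (measurable_pi_lambda _ fun i ↦ hc.comp (measurable_pi_apply i))
      (MeasurableSet.of_discrete (s := {f : Fin k → ℤ | ¬Function.Injective f}))
  have hBle : π.real B ≤ k.choose 2 / N := by
    refine ENNReal.toReal_le_of_le_ofReal (by positivity) ?_
    refine (measure_pi_setOf_not_injective_le unitMeasure hc
      (unitMeasure_ceil_mul_preimage_le hN)).trans_eq ?_
    rw [Fintype.card_fin, ← ENNReal.ofReal_natCast, ← ENNReal.ofReal_mul (Nat.cast_nonneg _),
      mul_one_div]
  obtain ⟨x, hx0, hxB, hx01⟩ : ∃ x, inducedWeight F (graphonOfGraph G) x ≠ 0 ∧ x ∉ B ∧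
      ∀ i, x i ∈ Ioc (0 : ℝ) 1 := by
    by_contra hcon
    refine (h.trans_le ?_).not_ge hBle
    rw [inducedDensity_eq_integral_pi, ← integral_indicator_one hB]
    refine integral_mono_ae (hG.integrable_inducedWeight F)
      ((integrable_const 1).indicator hB) ?_
    filter_upwards [ae_pi_unitMeasure_mem_Ioc] with x hx01
    by_cases hxB : x ∈ B
    · simpa [hxB] using (hG.inducedWeight_mem_Icc F x).2
    · have : inducedWeight F (graphonOfGraph G) x = 0 :=
        by_contra fun hx0 ↦ hcon ⟨x, hx0, hxB, hx01⟩
      simp [hxB, this]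
  choose φ hφ using fun i ↦ exists_mem_cell hN (hx01 i)
  refine ⟨φ, fun i j hij ↦ not_not.1 hxB ?_, comap_eq_of_inducedWeight_ne_zero hx0 hφ⟩
  simp only [c, Function.comp_apply, mem_cell_iff_ceil.1 (hφ _), hij]

theorem IsHereditary.mem_of_inducedDensity_pos {Q : GraphClass} (hQ : IsHereditary Q)
    {W : ℝ → ℝ → ℝ} (hW : W ∈ limitSet Q) (hF : 0 < inducedDensity F W) : F ∈ Q k := by
  obtain ⟨hWgr, n, G, hG, hn, hlim⟩ := hW
  have hdensity : Tendsto (fun l ↦ inducedDensity F (graphonOfGraph (G l))) atTop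
      (nhds (inducedDensity F W)) := by
    rw [tendsto_iff_dist_tendsto_zero]
    refine squeeze_zero (fun _ ↦ dist_nonneg) (fun l ↦
      abs_inducedDensity_sub_le_deltaCut F (isGraphon_graphonOfGraph _) hWgr) ?_
    simpa using hlim.const_mul (k.choose 2 : ℝ)
  have hcollision : Tendsto (fun l ↦ (k.choose 2 : ℝ) / n l) atTop (nhds 0) :=
    (tendsto_const_div_atTop_nhds_zero_nat _).comp hn
  obtain ⟨l, hl, hnl⟩ :=
    ((hcollision.eventually_lt hdensity hF).and (hn.eventually_gt_atTop 0)).exists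
  obtain ⟨φ, hφ, rfl⟩ := exists_injective_comap_eq_of_lt_inducedDensity hnl hl
  exact hQ.comap_mem hφ (hG l)

theorem IsGraphon.inducedDensity_pos {W : ℝ → ℝ → ℝ} (hW : IsGraphon W) {B : Fin k → Set ℝ}
    (hB : ∀ i, unitMeasure (B i) ≠ 0)
    (hpos : ∀ i j, i < j → ∀ x ∈ B i, ∀ y ∈ B j, pairFactor F W (i, j) (x, y) ≠ 0) :
    0 < inducedDensity F W := by
  rw [inducedDensity_eq_integral_pi, integral_pos_iff_support_of_nonneg
    (fun x ↦ (hW.inducedWeight_mem_Icc F x).1) (hW.integrable_inducedWeight F)]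
  have hsub : univ.pi B ⊆ Function.support (inducedWeight F W) := fun x hx ↦
    Finset.prod_ne_zero_iff.2 fun e he ↦
      hpos e.1 e.2 (Finset.mem_filter.1 he).2 _ (hx _ trivial) _ (hx _ trivial)
  refine lt_of_lt_of_le (pos_iff_ne_zero.2 ?_) (measure_mono hsub)
  rw [Measure.pi_pi]
  exact Finset.prod_ne_zero_iff.2 fun i _ ↦ hB i

end InducedCopies

section MatrixCutNorm

open Matrix
open scoped Kronecker

variable {ι κ V : Type*} [Fintype ι] [Fintype κ] [Fintype V]

theorem MatrixCutNormLE.mono {A : Matrix ι κ ℝ} {C D : ℝ} (hA : MatrixCutNormLE A C)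
    (h : C ≤ D) : MatrixCutNormLE A D :=
  fun _ _ hf hg ↦ (hA hf hg).trans h

theorem MatrixCutNormLE.smul {A : Matrix ι κ ℝ} {C : ℝ} (hA : MatrixCutNormLE A C) (c : ℝ) :
    MatrixCutNormLE (c • A) (|c| * C) := fun f g hf hg ↦ by
  rw [smul_mulVec, dotProduct_smul, smul_eq_mul, abs_mul]
  exact mul_le_mul_of_nonneg_left (hA hf hg) (abs_nonneg c)

theorem dotProduct_mem_Icc {f g : ι → ℝ} (hf : ∀ i, f i ∈ Icc (0 : ℝ) 1)
    (hg : ∀ i, g i ∈ Icc (0 : ℝ) 1) : f ⬝ᵥ g ∈ Icc (0 : ℝ) (Fintype.card ι) := by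
  refine ⟨Finset.sum_nonneg fun i _ ↦ mul_nonneg (hf i).1 (hg i).1, ?_⟩
  simpa [dotProduct] using Finset.sum_le_card_nsmul Finset.univ (fun i ↦ f i * g i) 1
    fun i _ ↦ (unitInterval.mul_mem (hf i) (hg i)).2

theorem matrixCutNormLE_one [DecidableEq ι] :
    MatrixCutNormLE (1 : Matrix ι ι ℝ) (Fintype.card ι) := fun f g hf hg ↦ by
  rw [one_mulVec, abs_of_nonneg (dotProduct_mem_Icc hf hg).1]
  exact (dotProduct_mem_Icc hf hg).2

theorem MatrixCutNormLE.of_blocks {A : Matrix V V ℝ} {C : ℝ} (e : ι × κ ≃ V)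
    (hA : ∀ i j, MatrixCutNormLE (A.submatrix (fun a ↦ e (i, a)) fun b ↦ e (j, b)) C) :
    MatrixCutNormLE A (Fintype.card ι ^ 2 * C) := fun f g hf hg ↦ by
  have hsplit : f ⬝ᵥ A *ᵥ g = ∑ i, ∑ j, (fun a ↦ f (e (i, a))) ⬝ᵥ
      (A.submatrix (fun a ↦ e (i, a)) fun b ↦ e (j, b)) *ᵥ fun b ↦ g (e (j, b)) := by
    simp only [dotProduct, mulVec, ← e.sum_comp, Fintype.sum_prod_type, Finset.mul_sum,
      submatrix_apply]
    exact Finset.sum_congr rfl fun i _ ↦ Finset.sum_comm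
  calc |f ⬝ᵥ A *ᵥ g| ≤ ∑ _ : ι, ∑ _ : ι, C := by
        rw [hsplit]
        refine (Finset.abs_sum_le_sum_abs _ _).trans <| Finset.sum_le_sum fun i _ ↦ ?_
        exact (Finset.abs_sum_le_sum_abs _ _).trans <| Finset.sum_le_sum fun j _ ↦
          hA i j (fun _ ↦ hf _) fun _ ↦ hg _
    _ = Fintype.card ι ^ 2 * C := by simp [sq, mul_assoc]

/-- Lindsey's lemma. -/
theorem matrixCutNormLE_of_isHadamard [DecidableEq ι] {H : Matrix ι ι ℝ}
    (hH : H.IsHadamard) : MatrixCutNormLE H (Fintype.card ι * √(Fintype.card ι)) :=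
  fun f g hf hg ↦ by
  have hnorm : (H *ᵥ g) ⬝ᵥ (H *ᵥ g) = Fintype.card ι * (g ⬝ᵥ g) := by
    rw [dotProduct_mulVec, vecMul_mulVec, ← conjTranspose_eq_transpose_of_trivial,
      hH.conjTranspose_mul, vecMul_smul]
    simp
  refine abs_le_of_sq_le_sq ?_ (by positivity)
  calc (f ⬝ᵥ H *ᵥ g) ^ 2 ≤ (f ⬝ᵥ f) * ((H *ᵥ g) ⬝ᵥ (H *ᵥ g)) := by
        simpa only [dotProduct, sq] using Finset.sum_mul_sq_le_sq_mul_sq Finset.univ f (H *ᵥ g)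
    _ ≤ Fintype.card ι * (Fintype.card ι * Fintype.card ι) := by
        rw [hnorm]
        gcongr
        exacts [mul_nonneg (Nat.cast_nonneg _) (dotProduct_mem_Icc hg hg).1,
          (dotProduct_mem_Icc hf hf).2, (dotProduct_mem_Icc hg hg).2]
    _ = (Fintype.card ι * √(Fintype.card ι)) ^ 2 := by
        rw [mul_pow, Real.sq_sqrt (Nat.cast_nonneg _)]
        ring

/-- Sylvester's doubling construction. -/
theorem exists_isSymm_isHadamard_two_pow (k : ℕ) :
    ∃ H : Matrix (Fin (2 ^ k)) (Fin (2 ^ k)) ℝ, H.IsSymm ∧ H.IsHadamard := by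
  have htwo : (!![1, 1; 1, -1] : Matrix (Fin 2) (Fin 2) ℝ).IsHadamard := by
    refine ⟨fun i j ↦ ?_, ?_, ?_⟩
    · fin_cases i <;> fin_cases j <;> simp [Unitary.mem_iff_eq_one_or_eq_neg_one]
    all_goals
      ext i j
      fin_cases i <;> fin_cases j <;> norm_num [Matrix.mul_apply, Fin.sum_univ_two]
  have htwosymm : (!![1, 1; 1, -1] : Matrix (Fin 2) (Fin 2) ℝ).IsSymm := by
    ext i j
    fin_cases i <;> fin_cases j <;> rfl
  induction k with
  | zero =>
    refine ⟨1, isSymm_one, ⟨fun i j ↦ ?_, by simp, by simp⟩⟩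
    rw [Subsingleton.elim (α := Fin 1) i j]
    simp
  | succ k ih =>
    obtain ⟨H, hsymm, hH⟩ := ih
    have hkron : (H ⊗ₖ (!![1, 1; 1, -1] : Matrix (Fin 2) (Fin 2) ℝ)).IsSymm := by
      rw [IsSymm, ← kroneckerMap_transpose, hsymm.eq, htwosymm.eq]
    rw [pow_succ]
    exact ⟨_, hkron.submatrix finProdFinEquiv.symm, (hH.kronecker htwo).reindex _ _⟩

end MatrixCutNorm

section BlockGraphon

variable {r s : ℕ}

/-- The matrix of values of `W^{(r,s)}` on the products of cells. -/
def blockMatrix (r s : ℕ) : Matrix (Fin r) (Fin r) ℝ := fun i j ↦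
  if i = j then if (i : ℕ) < s then 1 else 0 else 1 / 2

open Classical in
theorem Wrs_apply (x y : ℝ) : Wrs r s x y =
    if ∃ i j, i ≠ j ∧ x ∈ cell r i ∧ y ∈ cell r j then 1 / 2
    else if ∃ i : Fin r, (i : ℕ) < s ∧ x ∈ cell r i ∧ y ∈ cell r i then 1 else 0 := by
  rw [Wrs]
  exact if_congr Iff.rfl rfl (if_congr Iff.rfl rfl rfl)

theorem Wrs_eq_stepKernel : Wrs r s = stepKernel (blockMatrix r s) := by
  rcases r.eq_zero_or_pos with rfl | hr
  · ext x y
    simp [Wrs_apply, stepKernel]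
  refine eq_stepKernel hr (fun i j x hx y hy ↦ ?_) fun x y h ↦ ?_ <;> rw [Wrs_apply]
  · have hoff : (∃ i' j', i' ≠ j' ∧ x ∈ cell r i' ∧ y ∈ cell r j') ↔ ¬i = j := by
      refine ⟨?_, fun hij ↦ ⟨i, j, hij, hx, hy⟩⟩
      rintro ⟨i', j', hij, hx', hy'⟩
      rwa [eq_of_mem_cell hx hx', eq_of_mem_cell hy hy']
    have hdiag : (∃ i' : Fin r, (i' : ℕ) < s ∧ x ∈ cell r i' ∧ y ∈ cell r i') ↔
        i = j ∧ (i : ℕ) < s := by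
      refine ⟨?_, fun hij ↦ ⟨i, hij.2, hx, hij.1 ▸ hy⟩⟩
      rintro ⟨i', his, hx', hy'⟩
      exact ⟨(eq_of_mem_cell hx hx').trans (eq_of_mem_cell hy' hy), eq_of_mem_cell hx hx' ▸ his⟩
    by_cases hij : i = j <;> simp [hoff, hdiag, blockMatrix, hij]
  · rw [if_neg, if_neg]
    · rintro ⟨i, -, hx, hy⟩
      exact h ⟨cell_subset_Ioc i hx, cell_subset_Ioc i hy⟩
    · rintro ⟨i, j, -, hx, hy⟩
      exact h ⟨cell_subset_Ioc i hx, cell_subset_Ioc j hy⟩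

theorem isGraphon_Wrs : IsGraphon (Wrs r s) := by
  rw [Wrs_eq_stepKernel]
  refine isGraphon_stepKernel ?_ fun i j ↦ ?_
  · ext i j
    rcases eq_or_ne i j with rfl | h
    · rfl
    · simp [blockMatrix, h, h.symm]
  · unfold blockMatrix
    split_ifs <;> norm_num

theorem inducedDensity_Wrs_pos {n : ℕ} {F : SimpleGraph (Fin n)}
    (hF : MemCRS r s F) : 0 < inducedDensity F (Wrs r s) := by
  obtain ⟨c, hc⟩ := hF
  refine isGraphon_Wrs.inducedDensity_pos (B := fun i ↦ cell r (c i)) (fun i ↦ ?_)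
    fun i j hij x hx y hy ↦ ?_
  · rw [unitMeasure, Measure.restrict_apply (measurableSet_cell _), inter_eq_left.2
      ((cell_subset_Ioc _).trans Ioc_subset_Icc_self), volume_cell]
    simpa using (c i).pos.ne'
  · rw [pairFactor, Wrs_eq_stepKernel, stepKernel_of_mem _ hx hy, blockMatrix]
    by_cases hpart : c i = c j
    · by_cases hclique : (c i : ℕ) < s
      · have hadj : F.Adj i j := (hc i j hij.ne hpart).1 hclique
        simp [hadj, ← hpart, hclique]
      · have hadj : ¬F.Adj i j := (hc i j hij.ne hpart).2 (not_lt.1 hclique)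
        simp [hadj, ← hpart, hclique]
    · split_ifs <;> norm_num

theorem divNat_finProdFinEquiv {n m : ℕ} (p : Fin n × Fin m) :
    (finProdFinEquiv p).divNat = p.1 :=
  congrArg Prod.fst (finProdFinEquiv.symm_apply_apply p)

theorem modNat_finProdFinEquiv {n m : ℕ} (p : Fin n × Fin m) :
    (finProdFinEquiv p).modNat = p.2 :=
  congrArg Prod.snd (finProdFinEquiv.symm_apply_apply p)

/-- The blow-up of the parts of `W^{(r,s)}` into `r` cliques and independent sets of `m` vertices,
with pseudorandom bipartite graphs between distinct parts: the pairs where `H` takes the value `1`.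
-/
def hadamardBlowup (r s : ℕ) {m : ℕ} (H : Matrix (Fin m) (Fin m) ℝ) :
    SimpleGraph (Fin (r * m)) :=
  .fromRel fun u v ↦
    if u.divNat = v.divNat then (u.divNat : ℕ) < s else H u.modNat v.modNat = 1

variable {m : ℕ} {H : Matrix (Fin m) (Fin m) ℝ}

theorem hadamardBlowup_adj (hH : H.IsSymm) {u v : Fin (r * m)} :
    (hadamardBlowup r s H).Adj u v ↔ u ≠ v ∧
      if u.divNat = v.divNat then (u.divNat : ℕ) < s else H u.modNat v.modNat = 1 := by
  rw [hadamardBlowup, SimpleGraph.fromRel_adj, hH.apply u.modNat v.modNat]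
  grind

theorem memCRS_hadamardBlowup (hH : H.IsSymm) : MemCRS r s (hadamardBlowup r s H) := by
  refine ⟨Fin.divNat, fun u v huv hdiv ↦ ?_⟩
  simp [hadamardBlowup_adj hH, huv, hdiv]

theorem hadamardBlowup_adj_finProdFinEquiv (hH : H.IsSymm) {i j : Fin r} {a b : Fin m} :
    (hadamardBlowup r s H).Adj (finProdFinEquiv (i, a)) (finProdFinEquiv (j, b)) ↔
      (i, a) ≠ (j, b) ∧ if i = j then (i : ℕ) < s else H a b = 1 := by
  rw [hadamardBlowup_adj hH, finProdFinEquiv.injective.ne_iff]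
  simp only [divNat_finProdFinEquiv, modNat_finProdFinEquiv]

theorem matrixCutNormLE_adjMatrix_hadamardBlowup_sub [DecidableRel (hadamardBlowup r s H).Adj]
    (hsymm : H.IsSymm) (hH : H.IsHadamard) :
    MatrixCutNormLE ((hadamardBlowup r s H).adjMatrix ℝ -
      (blockMatrix r s).submatrix Fin.divNat Fin.divNat) (r ^ 2 * (m * √m)) := by
  set A := (hadamardBlowup r s H).adjMatrix ℝ -
    (blockMatrix r s).submatrix Fin.divNat Fin.divNat
  have hblock (i j : Fin r) : MatrixCutNormLE (A.submatrix (fun a ↦ finProdFinEquiv (i, a))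
      fun b ↦ finProdFinEquiv (j, b)) (m * √m) := by
    rcases eq_or_ne i j with rfl | hij
    · have hdiag : (A.submatrix (fun a ↦ finProdFinEquiv (i, a)) fun b ↦ finProdFinEquiv (i, b)) =
          (if (i : ℕ) < s then -1 else 0 : ℝ) • (1 : Matrix (Fin m) (Fin m) ℝ) := by
        ext a b
        by_cases hab : a = b <;> by_cases his : (i : ℕ) < s <;>
          simp [A, hadamardBlowup_adj_finProdFinEquiv hsymm, divNat_finProdFinEquiv, blockMatrix,
            hab, his]
      have hm : (m : ℝ) ≤ m * √m := by
        rcases m.eq_zero_or_pos with rfl | hm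
        · simp
        · exact le_mul_of_one_le_right (Nat.cast_nonneg m) (Real.one_le_sqrt.2 (mod_cast hm))
      rw [hdiag]
      refine (matrixCutNormLE_one.smul _).mono ?_
      split_ifs
      · simpa using hm
      · simpa using hm.trans' (Nat.cast_nonneg m)
    · have hoff : (A.submatrix (fun a ↦ finProdFinEquiv (i, a)) fun b ↦ finProdFinEquiv (j, b)) =
          (1 / 2 : ℝ) • H := by
        ext a b
        rcases Unitary.mem_iff_eq_one_or_eq_neg_one.1 (hH.apply_mem a b) with hab | hab <;>
          norm_num [A, hadamardBlowup_adj_finProdFinEquiv hsymm, divNat_finProdFinEquiv,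
            blockMatrix, hij, hab]
      rw [hoff]
      refine ((matrixCutNormLE_of_isHadamard hH).smul _).mono ?_
      rw [Fintype.card_fin]
      exact mul_le_of_le_one_left (by positivity) (by norm_num)
  simpa using MatrixCutNormLE.of_blocks finProdFinEquiv hblock

theorem dCut_hadamardBlowup_Wrs_le (hr : 0 < r) (hm : 0 < m) (hsymm : H.IsSymm)
    (hH : H.IsHadamard) :
    dCut (graphonOfGraph (hadamardBlowup r s H)) (Wrs r s) ≤ 1 / √m := by
  classical
  have hsqrt : √(m : ℝ) ^ 2 = m := Real.sq_sqrt (Nat.cast_nonneg m)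
  rw [graphonOfGraph_eq_stepKernel, Wrs_eq_stepKernel, stepKernel_submatrix_divNat hr hm, dCut]
  simp only [← stepKernel_sub]
  refine (matrixCutNormLE_adjMatrix_hadamardBlowup_sub hsymm hH).cutNorm_stepKernel_le.trans_eq ?_
  push_cast
  field_simp
  exact hsqrt

theorem Wrs_mem_limitSet (hr : 0 < r) {Q : GraphClass}
    (hQ : ∀ n, 1 ≤ n → ∀ G : SimpleGraph (Fin n), MemCRS r s G → G ∈ Q n) :
    Wrs r s ∈ limitSet Q := by
  choose H hsymm hH using exists_isSymm_isHadamard_two_pow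
  refine ⟨isGraphon_Wrs, fun k ↦ r * 2 ^ k, fun k ↦ hadamardBlowup r s (H k),
    fun k ↦ hQ _ (Nat.mul_pos hr (by positivity)) _ (memCRS_hadamardBlowup (hsymm k)), ?_, ?_⟩
  · exact (tendsto_pow_atTop_atTop_of_one_lt one_lt_two).const_mul_atTop' hr
  refine squeeze_zero (fun _ ↦ deltaCut_nonneg _ _) (fun k ↦ (deltaCut_le_dCut _ _).trans <|
    dCut_hadamardBlowup_Wrs_le hr (by positivity) (hsymm k) (hH k)) ?_
  have hpow : Tendsto (fun k : ℕ ↦ ((2 ^ k : ℕ) : ℝ)) atTop atTop :=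
    tendsto_natCast_atTop_atTop.comp (tendsto_pow_atTop_atTop_of_one_lt one_lt_two)
  simpa only [one_div] using! (Real.tendsto_sqrt_atTop.comp hpow).inv_tendsto_atTop

end BlockGraphon

/-- Remark 1.7: for a hereditary class `Q`, `W^{(r,s)} ∈ Q̂` iff
`C(r,s) ⊆ Q`. -/
theorem stmt19 (r s : ℕ) (hr : 1 ≤ r) (hs : s ≤ r)
    (Q : GraphClass) (hQ : IsHereditary Q) :
    Wrs r s ∈ limitSet Q ↔
      ∀ n : ℕ, 1 ≤ n → ∀ G : SimpleGraph (Fin n), MemCRS r s G → G ∈ Q n :=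
  ⟨fun hW _ _ _ hG ↦ hQ.mem_of_inducedDensity_pos hW (inducedDensity_Wrs_pos hG),
    Wrs_mem_limitSet hr⟩

end
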